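/- Let n ≥ 1, d ∈ ℝ^n with d > 0 entrywise, y ∈ ℝ^n, and σ ∈ S_n. Then E_{d,y}(σ) ∈ M_d(y), i.e., there exists a d-stochastic matrix A with A·y = E_{d,y}(σ). -/

import Mathlib

open Finset

noncomputable def th {n : ℕ} (d y : Fin n → ℝ) (c : ℝ) : ℝ :=
  sInf ((fun i => (∑ j, max (y j - y i / d i * d j) 0) + y i / d i * c) ''
    {i : Fin n | 0 < d i})

noncomputable def psum {n : ℕ} (d : Fin n → ℝ) (σ : Equiv.Perm (Fin n)) (j : ℕ) : ℝ :=
  ∑ i ∈ Finset.univ.filter (fun i : Fin n => (i : ℕ) < j), d (σ i)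

noncomputable def Emap {n : ℕ} (d y : Fin n → ℝ) (σ : Equiv.Perm (Fin n)) : Fin n → ℝ :=
  fun k => th d y (psum d σ ((σ.symm k : ℕ) + 1)) - th d y (psum d σ (σ.symm k : ℕ))

def dStoch {n : ℕ} (d : Fin n → ℝ) (A : Matrix (Fin n) (Fin n) ℝ) : Prop :=
  (∀ i j, 0 ≤ A i j) ∧ (∀ j, ∑ i, A i j = 1) ∧ A.mulVec d = d

def Mset {n : ℕ} (d y : Fin n → ℝ) : Set (Fin n → ℝ) :=
  {x | ∃ A : Matrix (Fin n) (Fin n) ℝ, dStoch d A ∧ A.mulVec y = x}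

noncomputable def Aentry {n : ℕ} (d : Fin n → ℝ) (σ τ : Equiv.Perm (Fin n))
    (α : ℕ → Fin n) (j k : Fin n) : ℝ :=
  if k = α j.val ∧ (α j.val).val < (α (j.val + 1)).val then
    (psum d τ ((α j.val).val + 1) - psum d σ j.val) / d (τ (α j.val))
  else if (α j.val).val < k.val ∧ k.val < (α (j.val + 1)).val then 1
  else if (α j.val).val < (α (j.val + 1)).val ∧ k = α (j.val + 1) then
    (psum d σ (j.val + 1) - psum d τ (α (j.val + 1)).val) / d (τ (α (j.val + 1)))
  else if α j.val = α (j.val + 1) ∧ k = α (j.val + 1) then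
    d (σ j) / d (τ (α (j.val + 1)))
  else 0

noncomputable def Amat {n : ℕ} (d : Fin n → ℝ) (σ τ : Equiv.Perm (Fin n))
    (α : ℕ → Fin n) : Matrix (Fin n) (Fin n) ℝ :=
  Matrix.of fun p q => Aentry d σ τ α (σ.symm p) (τ.symm q)

/-!
Order the levels by decreasing slope `y j / d j`, via a permutation `τ`. Then `th d y c` is the
value of a fractional knapsack problem: it is the largest `∑ j, w j * (y j / d j)` over loads
`0 ≤ w ≤ d` of total size `c`, attained by filling the levels greedily in the order `τ`, and the
minimum over `i` defining `th` is its linear programming dual.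

Both `σ` and `τ` cut `[0, ∑ i, d i]` into consecutive intervals, with the interval of level `i`
having length `d i`. The matrix whose `(p, q)` entry is the fraction of the `τ`-interval of `q`
lying in the `σ`-interval of `p` is Gibbs-stochastic, and it sends `y` to the increments of the
greedy knapsack value along the `σ`-intervals, that is, to the point of the extreme point map.
-/

lemma sum_perm_sub_succ {M : Type*} [AddCommGroup M] {n : ℕ} (σ : Equiv.Perm (Fin n))
    (f : ℕ → M) : ∑ q, (f ((σ.symm q : ℕ) + 1) - f (σ.symm q : ℕ)) = f n - f 0 := by
  rw [Equiv.sum_comp σ.symm fun k : Fin n => f ((k : ℕ) + 1) - f k,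
    Fin.sum_univ_eq_sum_range fun k => f (k + 1) - f k, Finset.sum_range_sub]

lemma exists_fin_le_le_succ {α : Type*} [LinearOrder α] {n : ℕ} (hn : 1 ≤ n) {P : ℕ → α} {c : α}
    (h0 : P 0 ≤ c) (hc : c ≤ P n) : ∃ m : Fin n, P m ≤ c ∧ c ≤ P ((m : ℕ) + 1) := by
  induction n, hn using Nat.le_induction with
  | base => exact ⟨0, h0, hc⟩
  | succ n _ ih =>
    rcases le_total c (P n) with h | h
    · obtain ⟨m, hm⟩ := ih h
      exact ⟨m.castSucc, hm⟩
    · exact ⟨Fin.last n, h, hc⟩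

lemma exists_perm_antitone {α : Type*} [LinearOrder α] {n : ℕ} (r : Fin n → α) :
    ∃ τ : Equiv.Perm (Fin n), Antitone (r ∘ τ) :=
  ⟨Tuple.sort (OrderDual.toDual ∘ r), Tuple.monotone_sort (OrderDual.toDual ∘ r)⟩

section PartialSums

variable {n : ℕ} {d : Fin n → ℝ} (σ : Equiv.Perm (Fin n))

lemma psum_zero (d : Fin n → ℝ) : psum d σ 0 = 0 := by
  simp [psum]

lemma psum_succ (d : Fin n → ℝ) (k : Fin n) :
    psum d σ ((k : ℕ) + 1) = psum d σ k + d (σ k) := by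
  have insert_last : univ.filter (fun i : Fin n => (i : ℕ) < k + 1) =
      insert k (univ.filter fun i : Fin n => (i : ℕ) < k) := by
    ext i
    simp only [mem_filter, mem_univ, true_and, mem_insert, Fin.ext_iff]
    omega
  rw [psum, insert_last, sum_insert (by simp), add_comm, psum]

lemma psum_symm_succ (d : Fin n → ℝ) (q : Fin n) :
    psum d σ ((σ.symm q : ℕ) + 1) = psum d σ (σ.symm q : ℕ) + d q := by
  rw [psum_succ, Equiv.apply_symm_apply]

lemma psum_card (d : Fin n → ℝ) : psum d σ n = ∑ i, d i := by
  rw [psum, filter_true_of_mem fun i _ => i.isLt, Equiv.sum_comp σ d]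

lemma psum_monotone (hd : 0 ≤ d) : Monotone (psum d σ) := fun _ _ hab =>
  sum_le_sum_of_subset_of_nonneg
    (monotone_filter_right _ fun _ _ hi => lt_of_lt_of_le hi hab) fun i _ _ => hd (σ i)

lemma psum_mem_Icc (hd : 0 ≤ d) {k : ℕ} (hk : k ≤ n) :
    psum d σ k ∈ Set.Icc 0 (∑ i, d i) :=
  ⟨psum_zero σ d ▸ psum_monotone σ hd k.zero_le, psum_card σ d ▸ psum_monotone σ hd hk⟩

end PartialSums

lemma mul_div_le_max_add_mul {d w : ℝ} (hd : 0 < d) (hw : 0 ≤ w) (hwd : w ≤ d) (y r : ℝ) :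
    w * (y / d) ≤ max (y - r * d) 0 + r * w := by
  have gain_eq : y - r * d = d * (y / d - r) := by field_simp
  have gain_le : w * (y / d - r) ≤ max (y - r * d) 0 := by
    rw [gain_eq]
    rcases le_total r (y / d) with h | h
    · exact (mul_le_mul_of_nonneg_right hwd (sub_nonneg.2 h)).trans (le_max_left _ _)
    · exact (mul_nonpos_of_nonneg_of_nonpos hw (sub_nonpos.2 h)).trans (le_max_right _ _)
  linarith

lemma mul_div_eq_max_add_mul {d w y r : ℝ} (hd : 0 < d) (hfull : r < y / d → w = d)
    (hzero : y / d < r → w = 0) : w * (y / d) = max (y - r * d) 0 + r * w := by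
  rcases lt_trichotomy r (y / d) with h | h | h
  · have gain_nonneg : 0 ≤ y - r * d := sub_nonneg.2 ((le_div_iff₀ hd).1 h.le)
    rw [hfull h, max_eq_left gain_nonneg, mul_div_cancel₀ y hd.ne', sub_add_cancel]
  · rw [h, div_mul_cancel₀ y hd.ne', sub_self, max_self, zero_add, mul_comm]
  · have gain_nonpos : y - r * d ≤ 0 := sub_nonpos.2 ((div_le_iff₀ hd).1 h.le)
    rw [hzero h, max_eq_right gain_nonpos, zero_mul, mul_zero, add_zero]

/-- Linear programming duality for `th`: any load bounds every term of the minimum from below, and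
`hfull` and `hzero` are the complementary slackness conditions under which term `i` attains it. -/
lemma th_sum_eq_sum_mul_div {n : ℕ} {d w y : Fin n → ℝ} (hd : ∀ j, 0 < d j) (hw : 0 ≤ w)
    (hwd : w ≤ d) (i : Fin n) (hfull : ∀ j, y i / d i < y j / d j → w j = d j)
    (hzero : ∀ j, y j / d j < y i / d i → w j = 0) :
    th d y (∑ j, w j) = ∑ j, w j * (y j / d j) := by
  refine IsLeast.csInf_eq ⟨⟨i, hd i, ?_⟩, ?_⟩
  · simp only [mul_sum, ← sum_add_distrib]
    exact sum_congr rfl fun j _ => (mul_div_eq_max_add_mul (hd j) (hfull j) (hzero j)).symm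
  · rintro _ ⟨k, -, rfl⟩
    simp only [mul_sum, ← sum_add_distrib]
    exact sum_le_sum fun j _ => mul_div_le_max_add_mul (hd j) (hw j) (hwd j) (y j) (y k / d k)

/-- The greedy load of total size `c`: the levels, with capacities `d`, are filled one after the
other in the order `τ`, so that level `q` receives the length of the part of its interval
`[psum d τ (τ.symm q), psum d τ (τ.symm q + 1)]` lying below `c`. -/
noncomputable def greedyFill {n : ℕ} (d : Fin n → ℝ) (τ : Equiv.Perm (Fin n)) (c : ℝ) :
    Fin n → ℝ :=
  fun q => min c (psum d τ ((τ.symm q : ℕ) + 1)) - min c (psum d τ (τ.symm q : ℕ))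

namespace greedyFill

variable {n : ℕ} {d : Fin n → ℝ} (τ : Equiv.Perm (Fin n)) {c : ℝ}

lemma sum_eq (hc : c ∈ Set.Icc 0 (∑ i, d i)) : ∑ q, greedyFill d τ c q = c := by
  simp only [greedyFill]
  rw [sum_perm_sub_succ τ fun k => min c (psum d τ k), psum_card, psum_zero, min_eq_left hc.2,
    min_eq_right hc.1, sub_zero]

lemma monotone (hd : 0 ≤ d) : Monotone (greedyFill d τ) := by
  intro a b hab q
  have hdq : 0 ≤ d q := hd q
  simp only [greedyFill, psum_symm_succ]
  grind

lemma eq_capacity (hd : 0 ≤ d) {q : Fin n} (hc : psum d τ ((τ.symm q : ℕ) + 1) ≤ c) :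
    greedyFill d τ c q = d q := by
  have interval_le := psum_monotone τ hd (τ.symm q : ℕ).le_succ
  rw [greedyFill, min_eq_right hc, min_eq_right (interval_le.trans hc), psum_symm_succ,
    add_sub_cancel_left]

lemma eq_zero (hd : 0 ≤ d) {q : Fin n} (hc : c ≤ psum d τ (τ.symm q : ℕ)) :
    greedyFill d τ c q = 0 := by
  have interval_le := psum_monotone τ hd (τ.symm q : ℕ).le_succ
  rw [greedyFill, min_eq_left hc, min_eq_left (hc.trans interval_le), sub_self]

lemma apply_zero (hd : 0 ≤ d) : greedyFill d τ 0 = 0 :=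
  funext fun _ => eq_zero τ hd (psum_mem_Icc τ hd Fin.is_le').1

lemma apply_sum (hd : 0 ≤ d) : greedyFill d τ (∑ i, d i) = d :=
  funext fun q => eq_capacity τ hd (psum_mem_Icc τ hd (τ.symm q).isLt).2

end greedyFill

lemma th_eq_sum_greedyFill {n : ℕ} (hn : 1 ≤ n) {d y : Fin n → ℝ} (hd : ∀ i, 0 < d i)
    {τ : Equiv.Perm (Fin n)} (hτ : Antitone ((fun i => y i / d i) ∘ τ)) {c : ℝ}
    (hc : c ∈ Set.Icc 0 (∑ i, d i)) :
    th d y c = ∑ q, greedyFill d τ c q * (y q / d q) := by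
  have hd0 : 0 ≤ d := fun i => (hd i).le
  obtain ⟨m, hmc, hcm⟩ : ∃ m : Fin n, psum d τ m ≤ c ∧ c ≤ psum d τ ((m : ℕ) + 1) :=
    exists_fin_le_le_succ hn ((psum_zero τ d).trans_le hc.1) (hc.2.trans_eq (psum_card τ d).symm)
  have before {j : Fin n} (hj : y (τ m) / d (τ m) < y j / d j) : τ.symm j < m :=
    hτ.reflect_lt (by simpa using hj)
  have after {j : Fin n} (hj : y j / d j < y (τ m) / d (τ m)) : m < τ.symm j :=
    hτ.reflect_lt (by simpa using hj)
  have fill_nonneg : 0 ≤ greedyFill d τ c :=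
    greedyFill.apply_zero τ hd0 ▸ greedyFill.monotone τ hd0 hc.1
  have fill_le : greedyFill d τ c ≤ d :=
    (greedyFill.monotone τ hd0 hc.2).trans_eq (greedyFill.apply_sum τ hd0)
  have duality := th_sum_eq_sum_mul_div hd fill_nonneg fill_le (τ m)
    (fun j hj => greedyFill.eq_capacity τ hd0 ((psum_monotone τ hd0 (before hj)).trans hmc))
    (fun j hj => greedyFill.eq_zero τ hd0 (hcm.trans (psum_monotone τ hd0 (after hj))))
  rwa [greedyFill.sum_eq τ hc] at duality

/-- The matrix whose `(p, q)` entry is the fraction of the interval of `q` in the partition of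
`[0, ∑ i, d i]` given by `τ` that lies in the interval of `p` in the partition given by `σ`. It is
the Gibbs-stochastic matrix realizing the extreme point of `σ`. -/
noncomputable def overlapMatrix {n : ℕ} (d : Fin n → ℝ) (σ τ : Equiv.Perm (Fin n)) :
    Matrix (Fin n) (Fin n) ℝ :=
  Matrix.of fun p q => (greedyFill d τ (psum d σ ((σ.symm p : ℕ) + 1)) q -
    greedyFill d τ (psum d σ (σ.symm p : ℕ)) q) / d q

namespace overlapMatrix

variable {n : ℕ} (d : Fin n → ℝ) (σ τ : Equiv.Perm (Fin n))

lemma mulVec_apply (x : Fin n → ℝ) (p : Fin n) :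
    (overlapMatrix d σ τ).mulVec x p =
      ∑ q, greedyFill d τ (psum d σ ((σ.symm p : ℕ) + 1)) q * (x q / d q) -
        ∑ q, greedyFill d τ (psum d σ (σ.symm p : ℕ)) q * (x q / d q) := by
  simp only [Matrix.mulVec, dotProduct, overlapMatrix, Matrix.of_apply, ← sum_sub_distrib]
  exact sum_congr rfl fun q _ => by ring

variable {d}

lemma nonneg (hd : 0 ≤ d) (p q : Fin n) : 0 ≤ overlapMatrix d σ τ p q :=
  div_nonneg (sub_nonneg.2 (greedyFill.monotone τ hd (psum_monotone σ hd (Nat.le_succ _)) q))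
    (hd q)

lemma sum_col (hd : ∀ i, 0 < d i) (q : Fin n) : ∑ p, overlapMatrix d σ τ p q = 1 := by
  have hd0 : 0 ≤ d := fun i => (hd i).le
  simp only [overlapMatrix, Matrix.of_apply]
  rw [← sum_div, sum_perm_sub_succ σ fun k => greedyFill d τ (psum d σ k) q, psum_card,
    psum_zero, greedyFill.apply_sum τ hd0, greedyFill.apply_zero τ hd0, Pi.zero_apply, sub_zero,
    div_self (hd q).ne']

lemma mulVec_self (hd : ∀ i, 0 < d i) : (overlapMatrix d σ τ).mulVec d = d := by
  have hd0 : 0 ≤ d := fun i => (hd i).le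
  ext p
  simp only [mulVec_apply, div_self (hd _).ne', mul_one]
  rw [greedyFill.sum_eq τ (psum_mem_Icc σ hd0 (σ.symm p).isLt),
    greedyFill.sum_eq τ (psum_mem_Icc σ hd0 (σ.symm p).isLt.le), psum_symm_succ,
    add_sub_cancel_left]

end overlapMatrix

lemma dStoch_overlapMatrix {n : ℕ} {d : Fin n → ℝ} (σ τ : Equiv.Perm (Fin n))
    (hd : ∀ i, 0 < d i) : dStoch d (overlapMatrix d σ τ) :=
  ⟨overlapMatrix.nonneg σ τ fun i => (hd i).le, overlapMatrix.sum_col σ τ hd,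
    overlapMatrix.mulVec_self σ τ hd⟩

/-- Every point in the image of the extreme point map lies in the
thermomajorization polytope M_d(y). -/
theorem stmt8 (n : ℕ) (hn : 1 ≤ n) (d : Fin n → ℝ) (hd : ∀ i, 0 < d i)
    (y : Fin n → ℝ) (σ : Equiv.Perm (Fin n)) :
    ∃ A : Matrix (Fin n) (Fin n) ℝ, dStoch d A ∧ A.mulVec y = Emap d y σ := by
  obtain ⟨τ, hτ⟩ := exists_perm_antitone fun i => y i / d i
  refine ⟨overlapMatrix d σ τ, dStoch_overlapMatrix σ τ hd, ?_⟩
  ext p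
  have cut_mem {k : ℕ} (hk : k ≤ n) : psum d σ k ∈ Set.Icc 0 (∑ i, d i) :=
    psum_mem_Icc σ (fun i => (hd i).le) hk
  rw [overlapMatrix.mulVec_apply, Emap, th_eq_sum_greedyFill hn hd hτ (cut_mem (σ.symm p).isLt),
    th_eq_sum_greedyFill hn hd hτ (cut_mem (σ.symm p).isLt.le)]
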